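/- arXiv:2011.03520 — 2 statements merged into one kernel-verified Lean document; each statement's English description precedes it below -/
import Mathlib

section
/- Let A be a finitely generated free abelian group. Then Γ(A) is isomorphic to the subgroup of symmetric tensors in A ⊗ A via the map sending v(a) to a ⊗ a. -/
open TensorProduct

/-- The relations defining Whitehead's quadratic group `Γ(A)`:
`v(-a) - v(a)` and `v(a+b+c) - v(b+c) - v(c+a) - v(a+b) + v(a) + v(b) + v(c)`. -/
def gammaRels (A : Type*) [AddCommGroup A] : AddSubgroup (FreeAbelianGroup A) :=
  AddSubgroup.closure
    ({x | ∃ a : A, x = FreeAbelianGroup.of (-a) - FreeAbelianGroup.of a} ∪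
     {x | ∃ a b c : A, x =
        FreeAbelianGroup.of (a + b + c) - FreeAbelianGroup.of (b + c)
          - FreeAbelianGroup.of (c + a) - FreeAbelianGroup.of (a + b)
          + FreeAbelianGroup.of a + FreeAbelianGroup.of b + FreeAbelianGroup.of c})

/-- Whitehead's quadratic group `Γ(A)`: the abelian group generated by the symbols `v(a)`, `a ∈ A`,
modulo the relations `v(-a) = v(a)` and
`v(a+b+c) - v(b+c) - v(c+a) - v(a+b) + v(a) + v(b) + v(c) = 0`. -/
abbrev GammaW (A : Type*) [AddCommGroup A] := FreeAbelianGroup A ⧸ gammaRels A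

/-- The generator `v(a)` of `Γ(A)`. -/
def vW {A : Type*} [AddCommGroup A] (a : A) : GammaW A :=
  QuotientAddGroup.mk (FreeAbelianGroup.of a)

/-- The submodule of symmetric tensors of `V ⊗[R] V`, i.e. the elements fixed by the swap
involution `a ⊗ b ↦ b ⊗ a`. -/
noncomputable def symTensorsR (R : Type*) (V : Type*) [CommRing R] [AddCommGroup V]
    [Module R V] :=
  LinearMap.ker ((TensorProduct.comm R V V).toLinearMap - LinearMap.id)

/-- The subgroup of symmetric tensors of `V ⊗[ℤ] V`.  For `V` free abelian this realises
Whitehead's quadratic functor `Γ(V)`. -/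
noncomputable abbrev symTensors (V : Type*) [AddCommGroup V] [Module ℤ V] :=
  symTensorsR ℤ V

theorem vW_neg {A : Type*} [AddCommGroup A] (a : A) : vW (-a) = vW a := by
  unfold vW
  rw [← sub_eq_zero, ← QuotientAddGroup.mk_sub, QuotientAddGroup.eq_zero_iff]
  exact AddSubgroup.subset_closure (Or.inl ⟨a, rfl⟩)

theorem vW_rel {A : Type*} [AddCommGroup A] (a b c : A) :
    vW (a + b + c) - vW (b + c) - vW (c + a) - vW (a + b) + vW a + vW b + vW c = 0 := by
  have h : ((FreeAbelianGroup.of (a + b + c) - FreeAbelianGroup.of (b + c)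
          - FreeAbelianGroup.of (c + a) - FreeAbelianGroup.of (a + b)
          + FreeAbelianGroup.of a + FreeAbelianGroup.of b + FreeAbelianGroup.of c :
          FreeAbelianGroup A) : GammaW A) = 0 := by
    rw [QuotientAddGroup.eq_zero_iff]
    exact AddSubgroup.subset_closure (Or.inr ⟨a, b, c, rfl⟩)
  exact h

theorem vW_zero {A : Type*} [AddCommGroup A] : vW (0 : A) = 0 := by
  have h := vW_rel (0 : A) 0 0
  simp only [add_zero] at h
  rw [← h]; abel

theorem gammaW_hom_ext {A B : Type*} [AddCommGroup A] [AddCommGroup B] {f g : GammaW A →+ B}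
    (h : ∀ a, f (vW a) = g (vW a)) : f = g := by
  apply QuotientAddGroup.addMonoidHom_ext
  apply FreeAbelianGroup.lift_ext
  exact h

theorem wW_add_left {A : Type*} [AddCommGroup A] (a b c : A) :
    vW (a + b + c) - vW (a + b) - vW c = (vW (a + c) - vW a - vW c) + (vW (b + c) - vW b - vW c) := by
  have h := vW_rel a b c
  rw [add_comm c a] at h
  rw [← sub_eq_zero, ← h]; abel

/-- polarization of `v` -/
def wW {A : Type*} [AddCommGroup A] : A →ₗ[ℤ] A →ₗ[ℤ] GammaW A :=
  AddMonoidHom.toIntLinearMap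
    (AddMonoidHom.mk' (fun a => AddMonoidHom.toIntLinearMap
      (AddMonoidHom.mk' (fun b => vW (a + b) - vW a - vW b) (by
        intro b c
        have h := wW_add_left b c a
        rw [add_comm (b + c) a, add_comm b a, add_comm c a] at h
        calc _ = vW (a + (b + c)) - vW (b + c) - vW a := by abel
          _ = _ := by rw [h]; abel)))
     (by
      intro a b
      ext c
      exact wW_add_left a b c))

theorem wW_apply {A : Type*} [AddCommGroup A] (a b : A) :
    wW a b = vW (a + b) - vW a - vW b := rfl

theorem wW_self {A : Type*} [AddCommGroup A] (a : A) : wW a a = vW a + vW a := by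
  have h : wW a (-a) = - (vW a + vW a) := by
    rw [wW_apply, add_neg_cancel, vW_zero, vW_neg]; abel
  rw [map_neg] at h
  exact neg_injective h

theorem wW_comm {A : Type*} [AddCommGroup A] (a b : A) : wW a b = wW b a := by
  rw [wW_apply, wW_apply, add_comm]; abel

/-- the map `v(a) ↦ a ⊗ a` -/
noncomputable def phiW (A : Type*) [AddCommGroup A] : GammaW A →+ TensorProduct ℤ A A :=
  QuotientAddGroup.lift (gammaRels A) (FreeAbelianGroup.lift (fun a : A => a ⊗ₜ[ℤ] a)) (by
    rw [gammaRels, AddSubgroup.closure_le]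
    rintro x (⟨a, rfl⟩ | ⟨a, b, c, rfl⟩)
    · simp [TensorProduct.neg_tmul, TensorProduct.tmul_neg]
    · simp only [SetLike.mem_coe, AddMonoidHom.mem_ker, map_sub, map_add,
        FreeAbelianGroup.lift_apply_of, TensorProduct.add_tmul, TensorProduct.tmul_add]
      abel)

theorem phiW_vW {A : Type*} [AddCommGroup A] (a : A) : phiW A (vW a) = a ⊗ₜ[ℤ] a := by
  simp [phiW, vW]

theorem phiW_wW {A : Type*} [AddCommGroup A] (a b : A) :
    phiW A (wW a b) = a ⊗ₜ[ℤ] b + b ⊗ₜ[ℤ] a := by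
  rw [wW_apply, map_sub, map_sub, phiW_vW, phiW_vW, phiW_vW]
  simp only [TensorProduct.add_tmul, TensorProduct.tmul_add]
  abel

theorem mem_symTensors {A : Type*} [AddCommGroup A] (t : TensorProduct ℤ A A) :
    t ∈ symTensors A ↔ TensorProduct.comm ℤ A A t = t := by
  simp [symTensorsR, sub_eq_zero]

theorem phiW_mem {A : Type*} [AddCommGroup A] (x : GammaW A) : phiW A x ∈ symTensors A := by
  rw [mem_symTensors]
  have : ((TensorProduct.comm ℤ A A).toLinearMap.toAddMonoidHom).comp (phiW A) = phiW A := by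
    apply gammaW_hom_ext
    intro a
    simp [phiW_vW]
  exact DFunLike.congr_fun this x

section
/-- prefer the tensor product module structure -/
noncomputable local instance instTensorZ {B : Type*} [AddCommGroup B] :
    Module ℤ (TensorProduct ℤ B B) := TensorProduct.leftModule

variable {A : Type*} [AddCommGroup A] {n : ℕ} (b : Module.Basis (Fin n) ℤ A)

/-- the inverse map on all tensors -/
noncomputable def psiW : TensorProduct ℤ A A →ₗ[ℤ] GammaW A :=
  (b.tensorProduct b).constr ℤ (fun p =>
    if p.1 < p.2 then wW (b p.1) (b p.2) else if p.1 = p.2 then vW (b p.1) else 0)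

/-- the upper triangular part -/
noncomputable def upW : TensorProduct ℤ A A →ₗ[ℤ] TensorProduct ℤ A A :=
  (b.tensorProduct b).constr ℤ (fun p => if p.1 ≤ p.2 then b p.1 ⊗ₜ[ℤ] b p.2 else 0)

theorem psiW_basis (i j : Fin n) : psiW b (b i ⊗ₜ[ℤ] b j) =
    if i < j then wW (b i) (b j) else if i = j then vW (b i) else 0 := by
  rw [← Module.Basis.tensorProduct_apply, psiW, Module.Basis.constr_basis]

theorem upW_basis (i j : Fin n) : upW b (b i ⊗ₜ[ℤ] b j) =
    if i ≤ j then b i ⊗ₜ[ℤ] b j else 0 := by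
  rw [← Module.Basis.tensorProduct_apply, upW, Module.Basis.constr_basis]
  simp

theorem psiW_polar (x y : A) : psiW b (x ⊗ₜ[ℤ] y) + psiW b (y ⊗ₜ[ℤ] x) = wW x y := by
  have h : (TensorProduct.mk ℤ A A).compr₂ (psiW b) + (TensorProduct.mk ℤ A A).flip.compr₂ (psiW b)
      = wW := by
    apply b.ext; intro i
    apply b.ext; intro j
    simp only [LinearMap.add_apply, LinearMap.compr₂_apply, TensorProduct.mk_apply,
      LinearMap.flip_apply, psiW_basis]
    rcases lt_trichotomy i j with h | h | h
    · simp [h, h.not_gt, h.ne']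
    · subst h; simp [wW_self]
    · simp [h, h.not_gt, h.ne', wW_comm]
  exact LinearMap.congr_fun₂ h x y

theorem psiW_diag (x : A) : psiW b (x ⊗ₜ[ℤ] x) = vW x := by
  let D : A →+ GammaW A := AddMonoidHom.mk' (fun x => psiW b (x ⊗ₜ[ℤ] x) - vW x) (by
    intro x y
    have h := psiW_polar b x y
    rw [wW_apply] at h
    have h2 : vW (x + y) = psiW b (x ⊗ₜ[ℤ] y) + psiW b (y ⊗ₜ[ℤ] x) + vW x + vW y := by
      rw [h]; abel
    rw [h2]
    simp only [TensorProduct.add_tmul, TensorProduct.tmul_add, map_add]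
    abel)
  have h : D.toIntLinearMap = 0 := by
    apply b.ext; intro i
    change psiW b (b i ⊗ₜ[ℤ] b i) - vW (b i) = 0
    rw [psiW_basis]; simp
  exact sub_eq_zero.mp (LinearMap.congr_fun h x)

theorem phiW_psiW (t : TensorProduct ℤ A A) : phiW A (psiW b t) =
    upW b t + (TensorProduct.comm ℤ A A t - upW b (TensorProduct.comm ℤ A A t)) := by
  let E : TensorProduct ℤ A A →ₗ[ℤ] TensorProduct ℤ A A :=
    { toFun := fun t => phiW A (psiW b t)
      map_add' := by simp
      map_smul' := by intro m x; rw [map_smul, map_zsmul]; simp }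
  have h : E = upW b + ((TensorProduct.comm ℤ A A).toLinearMap
      - (upW b).comp (TensorProduct.comm ℤ A A).toLinearMap) := by
    apply (b.tensorProduct b).ext
    rintro ⟨i, j⟩
    change phiW A (psiW b _) = _
    simp only [Module.Basis.tensorProduct_apply, psiW_basis, LinearMap.add_apply,
      LinearMap.sub_apply, LinearMap.comp_apply, LinearEquiv.coe_coe, TensorProduct.comm_tmul,
      upW_basis]
    rcases lt_trichotomy i j with h | h | h
    · simp [h, h.le, h.not_ge, phiW_wW]
    · subst h; simp [phiW_vW]
    · simp [h.not_gt, h.ne', h.le, h.not_ge]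
  exact LinearMap.congr_fun h t

end

/-- For a finitely generated free abelian group `A`, Whitehead's group `Γ(A)` is
isomorphic to the subgroup of symmetric tensors of `A ⊗ A` via the map `v(a) ↦ a ⊗ a`. -/
theorem stmt3 {A : Type*} [AddCommGroup A] [Module ℤ A] [Module.Finite ℤ A] [Module.Free ℤ A] :
    ∃ e : GammaW A ≃+ ↥(symTensors A),
      ∀ a : A, ((e (vW a) : ↥(symTensors A)) : TensorProduct ℤ A A) = a ⊗ₜ[ℤ] a := by
  obtain rfl : ‹Module ℤ A› = AddCommGroup.toIntModule A := Subsingleton.elim _ _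
  let b := Module.finBasis ℤ A
  refine ⟨{ toFun := fun x => ⟨phiW A x, phiW_mem x⟩
            invFun := fun t => psiW b t
            left_inv := ?_
            right_inv := ?_
            map_add' := ?_ }, fun a => phiW_vW a⟩
  · intro x
    have h : (psiW b).toAddMonoidHom.comp (phiW A) = AddMonoidHom.id _ := by
      apply gammaW_hom_ext
      intro a
      simp [phiW_vW, psiW_diag]
    exact DFunLike.congr_fun h x
  · rintro ⟨t, ht⟩
    apply Subtype.ext
    have h := phiW_psiW b t
    rw [(mem_symTensors t).mp ht] at h
    simpa using h
  · intro x y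
    apply Subtype.ext
    simp
end

section
/- Let π be a finite group and let 0 → A → B → C → 0 be a short exact sequence of ℤπ-lattices. Then there is a ℤπ-lattice D fitting into short exact sequences of ℤπ-modules 0 → Γ(A) → Γ(B) → D → 0 and 0 → A ⊗_ℤ C → D → Γ(C) → 0, where Γ is Whitehead's quadratic functor with diagonal π-action on Γ(M) ⊆ M ⊗ M. -/
open TensorProduct CategoryTheory

section SubQuot
variable {R : Type*} [CommRing R] {G : Type*} [Group G] {V : Type*} [AddCommGroup V]
  [Module R V]

/-- The restriction of a representation to an invariant submodule. -/
def subRep (ρ : Representation R G V) (p : Submodule R V)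
    (hp : ∀ g : G, ∀ x ∈ p, ρ g x ∈ p) : Representation R G p where
  toFun g := (ρ g).restrict (hp g)
  map_one' := by
    ext x
    simp [LinearMap.restrict_apply]
  map_mul' g h := by
    ext x
    simp [LinearMap.restrict_apply, map_mul]

/-- The representation induced on the quotient by an invariant submodule. -/
noncomputable def quotRep (ρ : Representation R G V) (p : Submodule R V)
    (hp : ∀ g : G, ∀ x ∈ p, ρ g x ∈ p) : Representation R G (V ⧸ p) where
  toFun g := Submodule.mapQ p p (ρ g) (hp g)
  map_one' := by
    apply LinearMap.ext
    intro x
    obtain ⟨v, rfl⟩ := Submodule.Quotient.mk_surjective p x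
    simp [Submodule.mapQ_apply]
  map_mul' g h := by
    apply LinearMap.ext
    intro x
    obtain ⟨v, rfl⟩ := Submodule.Quotient.mk_surjective p x
    simp [Submodule.mapQ_apply, map_mul]

end SubQuot

section GammaRep
variable {R : Type*} [CommRing R] {G : Type*} [Group G] {V : Type*} [AddCommGroup V]
  [Module R V]

lemma symTensors_invariant (ρ : Representation R G V) :
    ∀ g : G, ∀ x ∈ symTensorsR R V, (ρ.tprod ρ) g x ∈ symTensorsR R V := by
  intro g x hx
  have key : ∀ y : TensorProduct R V V, (TensorProduct.comm R V V) ((ρ.tprod ρ) g y)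
      = (ρ.tprod ρ) g ((TensorProduct.comm R V V) y) := by
    intro y
    induction y using TensorProduct.induction_on with
    | zero => simp
    | tmul a b => simp [Representation.tprod_apply]
    | add y z hy hz =>
        simp only [map_add, hy, hz]
  simp only [symTensorsR, LinearMap.mem_ker, LinearMap.sub_apply,
    LinearMap.id_apply, sub_eq_zero, LinearEquiv.coe_coe] at hx ⊢
  rw [key, hx]

/-- Whitehead's functor `Γ(V)` (realised as the symmetric tensors in `V ⊗ V`) as a
representation, with the diagonal `G`-action. -/
noncomputable def gammaRep (ρ : Representation R G V) : Representation R G ↥(symTensorsR R V) :=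
  subRep (ρ.tprod ρ) (symTensorsR R V) (symTensors_invariant ρ)

/-- The direct sum of two representations. -/
def prodRep {W : Type*} [AddCommGroup W] [Module R W]
    (ρ : Representation R G V) (σ : Representation R G W) : Representation R G (V × W) where
  toFun g := (ρ g).prodMap (σ g)
  map_one' := by
    apply LinearMap.ext
    rintro ⟨a, b⟩
    simp
  map_mul' g h := by
    apply LinearMap.ext
    rintro ⟨a, b⟩
    simp [map_mul]

end GammaRep

section RepObj
variable {k : Type} [CommRing k] {G : Type} [Group G]

/-- `Γ(V)` (the symmetric tensors with the diagonal action) as an object of `Rep k G`. -/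
noncomputable def gammaRepObj {V : Type} [AddCommGroup V] [Module k V]
    (ρ : Representation k G V) : Rep k G :=
  Rep.of (gammaRep ρ)

/-- `V ⊗ W` with the diagonal action as an object of `Rep k G`. -/
noncomputable def tprodRepObj {V W : Type} [AddCommGroup V] [Module k V] [AddCommGroup W]
    [Module k W] (ρ : Representation k G V) (σ : Representation k G W) : Rep k G :=
  Rep.of (ρ.tprod σ)

end RepObj

section Bauer
variable {R : Type} [CommRing R] {V W V' W' : Type} [AddCommGroup V] [Module R V]
  [AddCommGroup W] [Module R W] [AddCommGroup V'] [Module R V'] [AddCommGroup W'] [Module R W']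

lemma mem_symTensorsR (x : V ⊗[R] V) :
    x ∈ symTensorsR R V ↔ TensorProduct.comm R V V x = x := by
  simp [symTensorsR, sub_eq_zero]

lemma comm_map_aux (f : V →ₗ[R] V') (g : W →ₗ[R] W') (x : V ⊗[R] W) :
    TensorProduct.comm R V' W' (TensorProduct.map f g x)
      = TensorProduct.map g f (TensorProduct.comm R V W x) := by
  induction x using TensorProduct.induction_on with
  | zero => simp
  | tmul a b => simp
  | add y z hy hz => simp only [map_add, hy, hz]

lemma map_mem_symTensorsR (f : V →ₗ[R] W) (x : V ⊗[R] V) (hx : x ∈ symTensorsR R V) :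
    TensorProduct.map f f x ∈ symTensorsR R W := by
  rw [mem_symTensorsR] at *
  rw [comm_map_aux, hx]

lemma map_map_aux {V'' W'' : Type} [AddCommGroup V''] [Module R V''] [AddCommGroup W'']
    [Module R W''] (f : V →ₗ[R] V') (g : W →ₗ[R] W') (f' : V' →ₗ[R] V'') (g' : W' →ₗ[R] W'')
    (x : V ⊗[R] W) :
    TensorProduct.map f' g' (TensorProduct.map f g x)
      = TensorProduct.map (f' ∘ₗ f) (g' ∘ₗ g) x := by
  rw [TensorProduct.map_comp]; rfl

lemma tmap_sub_left (f f' : V →ₗ[R] V') (g : W →ₗ[R] W') :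
    TensorProduct.map (f - f') g = TensorProduct.map f g - TensorProduct.map f' g := by
  ext a b
  simp [TensorProduct.sub_tmul]

lemma tmap_sub_right (f : V →ₗ[R] V') (g g' : W →ₗ[R] W') :
    TensorProduct.map f (g - g') = TensorProduct.map f g - TensorProduct.map f g' := by
  ext a b
  simp [TensorProduct.tmul_sub]

lemma map_equivariant {G : Type} [Group G] {ρ : Representation R G V} {σ : Representation R G W}
    {ρ' : Representation R G V'} {σ' : Representation R G W'}
    {f : V →ₗ[R] V'} {h : W →ₗ[R] W'} (hf : ∀ g a, f (ρ g a) = ρ' g (f a))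
    (hh : ∀ g a, h (σ g a) = σ' g (h a)) (g : G) (x : V ⊗[R] W) :
    TensorProduct.map f h ((ρ.tprod σ) g x) = (ρ'.tprod σ') g (TensorProduct.map f h x) := by
  induction x using TensorProduct.induction_on with
  | zero => simp
  | tmul a b => simp [Representation.tprod_apply, hf, hh]
  | add y z hy hz => simp only [map_add, hy, hz]

end Bauer

section BauerMain
variable {R : Type} [CommRing R] {G A B C : Type} [Group G]
    [AddCommGroup A] [Module R A] [AddCommGroup B] [Module R B] [AddCommGroup C] [Module R C]

/-- The image of `Γ(B)` in `B ⊗ C`. -/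
noncomputable def bauerD (p : B →ₗ[R] C) : Submodule R (B ⊗[R] C) :=
  (symTensorsR R B).map (TensorProduct.map LinearMap.id p)

lemma bauerD_inv {ρB : Representation R G B} {ρC : Representation R G C} {p : B →ₗ[R] C}
    (hp : ∀ g b, p (ρB g b) = ρC g (p b)) (g : G) (x : B ⊗[R] C) (hx : x ∈ bauerD p) :
    (ρB.tprod ρC) g x ∈ bauerD p := by
  obtain ⟨y, hy, rfl⟩ := hx
  refine ⟨(ρB.tprod ρB) g y, symTensors_invariant ρB g y hy, ?_⟩
  exact map_equivariant (fun _ _ => rfl) hp g y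

/-- The image of `Γ(B)` in `B ⊗ C` as a representation. -/
noncomputable def bauerRep {ρB : Representation R G B} {ρC : Representation R G C}
    {p : B →ₗ[R] C} (hp : ∀ g b, p (ρB g b) = ρC g (p b)) : Rep R G :=
  Rep.of (subRep (ρB.tprod ρC) (bauerD p) (bauerD_inv hp))

theorem bauer_aux
    (ρA : Representation R G A) (ρB : Representation R G B) (ρC : Representation R G C)
    (i : A →ₗ[R] B) (p : B →ₗ[R] C)
    (hi : ∀ g a, i (ρA g a) = ρB g (i a)) (hp : ∀ g b, p (ρB g b) = ρC g (p b))
    (s : C →ₗ[R] B) (r : B →ₗ[R] A) (hps : p ∘ₗ s = LinearMap.id)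
    (hri : r ∘ₗ i = LinearMap.id) (hir : i ∘ₗ r = LinearMap.id - s ∘ₗ p)
    (hpi : p ∘ₗ i = 0) :
      ∃ (α : gammaRepObj ρA ⟶ gammaRepObj ρB)
        (β : gammaRepObj ρB ⟶ bauerRep hp)
        (γ : tprodRepObj ρA ρC ⟶ bauerRep hp)
        (δ : bauerRep hp ⟶ gammaRepObj ρC),
        Function.Injective α.hom ∧ Function.Surjective β.hom ∧
          Function.Exact α.hom β.hom ∧
        Function.Injective γ.hom ∧ Function.Surjective δ.hom ∧
          Function.Exact γ.hom δ.hom := by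
  have hγ : ∀ x : A ⊗[R] C, TensorProduct.map i LinearMap.id x ∈ bauerD p := by
    intro x
    induction x using TensorProduct.induction_on with
    | zero => simp
    | add y z hy hz => rw [map_add]; exact add_mem hy hz
    | tmul a c =>
      refine ⟨i a ⊗ₜ s c + s c ⊗ₜ i a, ?_, ?_⟩
      · exact (mem_symTensorsR _).2 (by simp [add_comm])
      · have h1 : p (s c) = c := LinearMap.congr_fun hps c
        have h2 : p (i a) = 0 := LinearMap.congr_fun hpi a
        simp [h1, h2]
  have hδ : ∀ x ∈ bauerD p, TensorProduct.map p LinearMap.id x ∈ symTensorsR R C := by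
    rintro _ ⟨y, hy, rfl⟩
    rw [map_map_aux]
    exact map_mem_symTensorsR p y hy
  let αl : symTensorsR R A →ₗ[R] symTensorsR R B :=
    (TensorProduct.map i i).restrict (map_mem_symTensorsR i)
  let βl : symTensorsR R B →ₗ[R] bauerD p :=
    (TensorProduct.map LinearMap.id p).restrict (fun x hx => ⟨x, hx, rfl⟩)
  let γl : A ⊗[R] C →ₗ[R] bauerD p :=
    (TensorProduct.map i LinearMap.id).codRestrict _ hγ
  let δl : bauerD p →ₗ[R] symTensorsR R C :=
    (TensorProduct.map p LinearMap.id).restrict hδ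
  refine ⟨Rep.ofHom (αl.intertwiningMap_of_isIntertwiningMap _ _ ?_),
    Rep.ofHom (βl.intertwiningMap_of_isIntertwiningMap _ _ ?_),
    Rep.ofHom (γl.intertwiningMap_of_isIntertwiningMap _ _ ?_),
    Rep.ofHom (δl.intertwiningMap_of_isIntertwiningMap _ _ ?_), ?_, ?_, ?_, ?_, ?_, ?_⟩
  · intro g v; exact Subtype.ext (map_equivariant hi hi g v.1)
  · intro g v; exact Subtype.ext (map_equivariant (fun _ _ => rfl) hp g v.1)
  · intro g v; exact Subtype.ext (map_equivariant hi (fun _ _ => rfl) g v)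
  · intro g v; exact Subtype.ext (map_equivariant hp (fun _ _ => rfl) g v.1)
  · change Function.Injective αl
    intro x y h
    have h' : TensorProduct.map i i x.1 = TensorProduct.map i i y.1 := congrArg Subtype.val h
    have h2 := congrArg (TensorProduct.map r r) h'
    rw [map_map_aux, map_map_aux, hri, TensorProduct.map_id] at h2
    exact Subtype.ext h2
  · change Function.Surjective βl
    rintro ⟨_, y, hy, rfl⟩
    exact ⟨⟨y, hy⟩, rfl⟩
  · change Function.Exact αl βl
    intro x
    constructor
    · intro h
      have h1 : TensorProduct.map LinearMap.id p x.1 = 0 := congrArg Subtype.val h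
      have hx := (mem_symTensorsR _).1 x.2
      have h2 : TensorProduct.map p LinearMap.id x.1 = 0 := by
        rw [← hx, ← comm_map_aux, h1, map_zero]
      refine ⟨⟨TensorProduct.map r r x.1, map_mem_symTensorsR r _ x.2⟩, Subtype.ext ?_⟩
      change TensorProduct.map i i (TensorProduct.map r r x.1) = x.1
      have e1 : TensorProduct.map LinearMap.id (i ∘ₗ r) x.1 = x.1 := by
        have := congrArg (TensorProduct.map LinearMap.id s) h1
        rw [map_map_aux, map_zero] at this
        rw [hir, tmap_sub_right, LinearMap.sub_apply, TensorProduct.map_id]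
        rw [LinearMap.id_comp] at this
        rw [this]; simp
      have e2 : TensorProduct.map (i ∘ₗ r) LinearMap.id x.1 = x.1 := by
        have := congrArg (TensorProduct.map s LinearMap.id) h2
        rw [map_map_aux, map_zero] at this
        rw [hir, tmap_sub_left, LinearMap.sub_apply, TensorProduct.map_id]
        rw [LinearMap.id_comp] at this
        rw [this]; simp
      rw [map_map_aux]
      have e3 := map_map_aux LinearMap.id (i ∘ₗ r) (i ∘ₗ r) LinearMap.id x.1
      rw [e1, e2] at e3
      exact e3.symm
    · rintro ⟨y, rfl⟩
      refine Subtype.ext ?_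
      change TensorProduct.map LinearMap.id p (TensorProduct.map i i y.1) = 0
      rw [map_map_aux, hpi]; simp
  · change Function.Injective γl
    intro x y h
    have h' : TensorProduct.map i LinearMap.id x = TensorProduct.map i LinearMap.id y :=
      congrArg Subtype.val h
    have h2 := congrArg (TensorProduct.map r LinearMap.id) h'
    rw [map_map_aux, map_map_aux, hri, LinearMap.id_comp, TensorProduct.map_id] at h2
    exact h2
  · change Function.Surjective δl
    intro y
    refine ⟨⟨_, TensorProduct.map s s y.1, map_mem_symTensorsR s _ y.2, rfl⟩, Subtype.ext ?_⟩
    change TensorProduct.map p LinearMap.id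
      (TensorProduct.map LinearMap.id p (TensorProduct.map s s y.1)) = y.1
    rw [map_map_aux, map_map_aux, LinearMap.id_comp, LinearMap.comp_id, hps,
      TensorProduct.map_id]
    rfl
  · change Function.Exact γl δl
    intro x
    constructor
    · intro h
      have h2 : TensorProduct.map p LinearMap.id x.1 = 0 := congrArg Subtype.val h
      refine ⟨TensorProduct.map r LinearMap.id x.1, Subtype.ext ?_⟩
      change TensorProduct.map i LinearMap.id (TensorProduct.map r LinearMap.id x.1) = x.1
      have := congrArg (TensorProduct.map s LinearMap.id) h2
      rw [map_map_aux, map_zero] at this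
      rw [map_map_aux, hir, LinearMap.id_comp, tmap_sub_left, LinearMap.sub_apply,
        TensorProduct.map_id]
      rw [LinearMap.id_comp] at this
      rw [this]; simp
    · rintro ⟨y, rfl⟩
      refine Subtype.ext ?_
      change TensorProduct.map p LinearMap.id (TensorProduct.map i LinearMap.id y) = 0
      rw [map_map_aux, hpi]; simp

end BauerMain

section BauerAux2

lemma bauer_split {R A B C : Type} [CommRing R]
    [AddCommGroup A] [Module R A] [AddCommGroup B] [Module R B] [AddCommGroup C] [Module R C]
    [Module.Free R C] (i : A →ₗ[R] B) (p : B →ₗ[R] C)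
    (hinj : Function.Injective i) (hsurj : Function.Surjective p)
    (hex : Function.Exact i p) :
    ∃ (s : C →ₗ[R] B) (r : B →ₗ[R] A), p ∘ₗ s = LinearMap.id ∧ r ∘ₗ i = LinearMap.id ∧
      i ∘ₗ r = LinearMap.id - s ∘ₗ p ∧ p ∘ₗ i = 0 := by
  obtain ⟨s, hps⟩ := Module.projective_lifting_property p LinearMap.id hsurj
  have hps' : ∀ c, p (s c) = c := fun c => LinearMap.congr_fun hps c
  have hpi : p ∘ₗ i = 0 := LinearMap.ext fun a => hex.apply_apply_eq_zero a
  have hmem : ∀ b, (LinearMap.id - s ∘ₗ p : B →ₗ[R] B) b ∈ LinearMap.range i := by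
    intro b
    exact (hex _).1 (by simp [hps'])
  let e := LinearEquiv.ofInjective i hinj
  let r : B →ₗ[R] A :=
    e.symm.toLinearMap ∘ₗ (LinearMap.id - s ∘ₗ p : B →ₗ[R] B).codRestrict _ hmem
  have hir : i ∘ₗ r = LinearMap.id - s ∘ₗ p := by
    refine LinearMap.ext fun b => ?_
    exact congrArg Subtype.val (e.apply_symm_apply ⟨_, hmem b⟩)
  have hri : r ∘ₗ i = LinearMap.id := by
    refine LinearMap.ext fun a => hinj ?_
    have h1 := LinearMap.congr_fun hir (i a)
    have h2 : p (i a) = 0 := LinearMap.congr_fun hpi a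
    simpa [h2] using h1
  exact ⟨s, r, hps, hri, hir, hpi⟩

lemma bauer_free {R M : Type} [CommRing R] [IsDomain R] [IsPrincipalIdealRing R]
    [AddCommGroup M] [Module R M] [Module.Finite R M]
    (h : ∀ (r : R) (m : M), r • m = 0 → r = 0 ∨ m = 0) : Module.Free R M := by
  have : NoZeroSMulDivisors R M := ⟨fun {r m} => h r m⟩
  infer_instance

lemma bauerD_finite {R B C : Type} [CommRing R] [IsNoetherianRing R]
    [AddCommGroup B] [Module R B] [AddCommGroup C] [Module R C]
    [Module.Finite R B] [Module.Finite R C] (p : B →ₗ[R] C) :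
    Module.Finite R (bauerD p) := inferInstance

lemma bauerD_torsion {R B C : Type} [CommRing R] [IsDomain R]
    [AddCommGroup B] [Module R B] [AddCommGroup C] [Module R C]
    [Module.Free R B] [Module.Free R C] (p : B →ₗ[R] C) (c : R) (x : bauerD p)
    (h : c • x = 0) : c = 0 ∨ x = 0 := smul_eq_zero.1 h

end BauerAux2

/-- Bauer's Lemma: for a finite group `π` and a short exact sequence
`0 → A → B → C → 0` of `ℤπ`-lattices, there is a `ℤπ`-lattice `D` and short exact sequences of
`ℤπ`-modules `0 → Γ(A) → Γ(B) → D → 0` and `0 → A ⊗_ℤ C → D → Γ(C) → 0`, where `Γ` is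
Whitehead's quadratic functor (the symmetric tensors with the diagonal `π`-action), and
`A ⊗_ℤ C` carries the diagonal `π`-action. -/
theorem stmt4 {G A B C : Type} [Group G] [Finite G]
    [AddCommGroup A] [Module ℤ A] [AddCommGroup B] [Module ℤ B] [AddCommGroup C] [Module ℤ C]
    [Module.Finite ℤ A] [NoZeroSMulDivisors ℤ A] [Module.Finite ℤ B] [NoZeroSMulDivisors ℤ B]
    [Module.Finite ℤ C] [NoZeroSMulDivisors ℤ C]
    (ρA : Representation ℤ G A) (ρB : Representation ℤ G B) (ρC : Representation ℤ G C)
    (i : A →ₗ[ℤ] B) (p : B →ₗ[ℤ] C)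
    (hi : ∀ g a, i (ρA g a) = ρB g (i a)) (hp : ∀ g b, p (ρB g b) = ρC g (p b))
    (hinj : Function.Injective i) (hsurj : Function.Surjective p)
    (hex : Function.Exact i p) :
    ∃ D : Rep ℤ G, Module.Finite ℤ D.V ∧ NoZeroSMulDivisors ℤ D.V ∧
      ∃ (α : gammaRepObj ρA ⟶ gammaRepObj ρB) (β : gammaRepObj ρB ⟶ D)
        (γ : tprodRepObj ρA ρC ⟶ D) (δ : D ⟶ gammaRepObj ρC),
        Function.Injective α.hom ∧ Function.Surjective β.hom ∧
          Function.Exact α.hom β.hom ∧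
        Function.Injective γ.hom ∧ Function.Surjective δ.hom ∧
          Function.Exact γ.hom δ.hom := by
  have fB : Module.Free ℤ B := bauer_free fun r m h =>
    eq_zero_or_eq_zero_of_smul_eq_zero ((int_smul_eq_zsmul _ r m).symm.trans h)
  have fC : Module.Free ℤ C := bauer_free fun r m h =>
    eq_zero_or_eq_zero_of_smul_eq_zero ((int_smul_eq_zsmul _ r m).symm.trans h)
  obtain ⟨s, r, hps, hri, hir, hpi⟩ := bauer_split i p hinj hsurj hex
  refine ⟨bauerRep hp, ?_, ?_,
    bauer_aux ρA ρB ρC i p hi hp s r hps hri hir hpi⟩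
  · have h := bauerD_finite p
    have key : AddCommGroup.toIntModule (bauerRep hp).V = (bauerRep hp).hV2 :=
      Subsingleton.elim _ _
    rw [key]
    exact h
  · refine ⟨fun {c x} h => bauerD_torsion p c x ?_⟩
    exact (int_smul_eq_zsmul (bauerRep hp).hV2 c x).trans h
end
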